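/- In ℚ, for every natural number n, Σ_{k=0}^{n} C(2k,k)³·C(2n−2k,n−k)³·(1 + 6k·(−H_k + H_{n−k} + H_{2k} − H_{2n−2k})) = Σ_{k=0}^{n} 16^{n−k}·C(2k,k)³·C(2n−2k,n−k). -/

import Mathlib

open Finset

/-!
Let `θ = X d/dX` and `L = θ³ - 8X(2θ + 1)³`. The series `f = ∑ C(2k,k)³ Xᵏ` and
`F = g + f log X`, with `g = ∑ 6 (H₂ₖ - Hₖ) C(2k,k)³ Xᵏ`, form the start of the Frobenius basis of
`L y = 0`. Since `L` is the symmetric square of an operator of order two, there are `y₀`, `y₁` with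
`f = y₀²` and `F = y₀ y₁`, so the Wronskian of `f` and `F` is `f` times that of `y₀` and `y₁`,
which is `(1 - 64X)^(-1/2) = ∑ 16ᵏ C(2k,k) Xᵏ`. To see this without constructing `y₀` and `y₁`,
check that `√(1 - 64X)` times the Wronskian `f² + f θg - θf g` is again a power series solution of
`L y = 0`; such a solution is determined by its constant term. It remains to compare coefficients
in `f² + f θg - θf g = f (1 - 64X)^(-1/2)`.
-/

namespace HarmonicBinomial

open PowerSeries
open scoped Polynomial

/-- The differential operator `P(D)` attached to a polynomial `P` with constant coefficients. -/
noncomputable abbrev diffOp {R A : Type*} [CommRing R] [CommRing A] [Algebra R A]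
    (D : Derivation R A A) (P : R[X]) : Module.End R A :=
  Polynomial.aeval (D : Module.End R A) P

section Euler

variable (R : Type*) [CommRing R]

/-- The Euler derivation `θ = X d/dX` on power series. -/
noncomputable def eulerDerivation : Derivation R R⟦X⟧ R⟦X⟧ :=
  (X : R⟦X⟧) • derivative R

variable {R}

lemma eulerDerivation_X : eulerDerivation R X = X := by
  simp [eulerDerivation]

lemma coeff_eulerDerivation (f : R⟦X⟧) (n : ℕ) :
    coeff n (eulerDerivation R f) = n * coeff n f := by
  cases n with
  | zero => simp [eulerDerivation]
  | succ n =>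
    simp [eulerDerivation, coeff_succ_X_mul, coeff_derivative, mul_comm]

lemma coeff_diffOp_eulerDerivation (P : R[X]) (f : R⟦X⟧) (n : ℕ) :
    coeff n (diffOp (eulerDerivation R) P f) = P.eval (n : R) * coeff n f := by
  induction P using Polynomial.induction_on' with
  | add P Q hP hQ => simp [hP, hQ, add_mul]
  | monomial k r =>
    have h_iterate (k : ℕ) :
        coeff n (((eulerDerivation R : Module.End R R⟦X⟧) ^ k) f) = (n : R) ^ k * coeff n f := by
      induction k with
      | zero => simp
      | succ k ih =>
        rw [pow_succ', Module.End.mul_apply, Derivation.coeFn_coe, coeff_eulerDerivation, ih]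
        ring
    simp [Polynomial.aeval_monomial, h_iterate, mul_assoc]

lemma eq_X_mul_iff (f g : R⟦X⟧) :
    f = X * g ↔ coeff 0 f = 0 ∧ ∀ n, coeff (n + 1) f = coeff n g := by
  refine ⟨?_, fun ⟨h_zero, h_succ⟩ => ?_⟩
  · rintro rfl
    simp [coeff_succ_X_mul]
  · ext (_ | n)
    · simpa using h_zero
    · rw [h_succ, coeff_succ_X_mul]

lemma diffOp_eulerDerivation_eq_X_mul_iff (P Q : R[X]) (f : R⟦X⟧) :
    diffOp (eulerDerivation R) P f = X * diffOp (eulerDerivation R) Q f ↔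
      P.eval 0 * coeff 0 f = 0 ∧
        ∀ n : ℕ, P.eval ((n + 1 : ℕ) : R) * coeff (n + 1) f = Q.eval (n : R) * coeff n f := by
  simp only [eq_X_mul_iff, coeff_diffOp_eulerDerivation, Nat.cast_zero]

lemma eq_of_diffOp_eulerDerivation_eq_X_mul [IsDomain R] {P Q : R[X]}
    (hP : ∀ n : ℕ, P.eval ((n + 1 : ℕ) : R) ≠ 0) {f g : R⟦X⟧}
    (hf : diffOp (eulerDerivation R) P f = X * diffOp (eulerDerivation R) Q f)
    (hg : diffOp (eulerDerivation R) P g = X * diffOp (eulerDerivation R) Q g)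
    (h_zero : coeff 0 f = coeff 0 g) : f = g := by
  rw [diffOp_eulerDerivation_eq_X_mul_iff] at hf hg
  ext n
  induction n with
  | zero => exact h_zero
  | succ n ih => exact mul_left_cancel₀ (hP n) (by rw [hf.2, hg.2, ih])

end Euler

section Logarithm

variable {R A : Type*} [CommRing R] [CommRing A] [Algebra R A]

/-- The extension of a derivation of `A` to `A[ℓ]` with `ℓ ↦ 1`. For the Euler derivation of a
power series ring, the polynomial variable `ℓ` is thus a formal logarithm of `X`. -/
noncomputable def logExtension (D : Derivation R A A) : Derivation R A[X] A[X] :=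
  ((PolynomialModule.equivPolynomialSelf (R := A)).toLinearMap.compDer D.mapCoeffs) +
    Polynomial.derivative'.restrictScalars R

lemma logExtension_C (D : Derivation R A A) (a : A) :
    logExtension D (Polynomial.C a) = Polynomial.C (D a) := by
  simp [logExtension, PolynomialModule.equivPolynomialSelf_apply_eq]

lemma logExtension_X (D : Derivation R A A) : logExtension D Polynomial.X = 1 := by
  simp [logExtension]

/-- The element `g + f ℓ` of `A[ℓ]`, read as `g + f log X`. -/
noncomputable def addLog (g f : A) : A[X] :=
  Polynomial.C g + Polynomial.C f * Polynomial.X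

lemma logExtension_addLog (D : Derivation R A A) (g f : A) :
    logExtension D (addLog g f) = addLog (D g + f) (D f) := by
  simp only [addLog, map_add, Derivation.leibniz, logExtension_C, logExtension_X, smul_eq_mul]
  ring

lemma diffOp_logExtension_addLog (D : Derivation R A A) (P : R[X]) (g f : A) :
    diffOp (logExtension D) P (addLog g f) =
      addLog (diffOp D P g + diffOp D (Polynomial.derivative P) f) (diffOp D P f) := by
  induction P using Polynomial.induction_on generalizing g f with
  | C r =>
    simp [addLog, Algebra.smul_def, Polynomial.C_mul, Polynomial.algebraMap_apply, mul_add,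
      mul_assoc]
  | add P Q hP hQ =>
    simp only [map_add (Polynomial.aeval _), LinearMap.add_apply, hP, hQ,
      Polynomial.derivative_add]
    simp only [addLog, Polynomial.C_add]
    ring
  | monomial k r ih =>
    have h_derivative : Polynomial.derivative (Polynomial.C r * Polynomial.X ^ (k + 1)) =
        Polynomial.derivative (Polynomial.C r * Polynomial.X ^ k) * Polynomial.X +
          Polynomial.C r * Polynomial.X ^ k := by
      rw [pow_succ, ← mul_assoc, Polynomial.derivative_mul, Polynomial.derivative_X, mul_one]
    rw [h_derivative, pow_succ, ← mul_assoc]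
    simp only [map_add (Polynomial.aeval _), map_mul _ _ Polynomial.X, Polynomial.aeval_X,
      Module.End.mul_apply, Derivation.coeFn_coe, logExtension_addLog, ih, LinearMap.add_apply]
    simp only [addLog, map_add]
    ring

lemma diffOp_logExtension_C (D : Derivation R A A) (P : R[X]) (g : A) :
    diffOp (logExtension D) P (Polynomial.C g) = Polynomial.C (diffOp D P g) := by
  simpa [addLog] using diffOp_logExtension_addLog D P g 0

/-- Frobenius's criterion at a double root of the indicial polynomial: the second recurrence is the
derivative of the first one with respect to the summation index. -/
theorem diffOp_addLog_of_recurrence {P Q : R[X]} {a b : ℕ → R}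
    (hP : P.eval 0 = 0) (hP' : (Polynomial.derivative P).eval 0 = 0)
    (ha : ∀ n : ℕ, P.eval ((n + 1 : ℕ) : R) * a (n + 1) = Q.eval (n : R) * a n)
    (hb : ∀ n : ℕ, P.eval ((n + 1 : ℕ) : R) * b (n + 1) +
        (Polynomial.derivative P).eval ((n + 1 : ℕ) : R) * a (n + 1) =
      Q.eval (n : R) * b n + (Polynomial.derivative Q).eval (n : R) * a n) :
    diffOp (logExtension (eulerDerivation R)) P (addLog (mk b) (mk a)) =
      Polynomial.C X *
        diffOp (logExtension (eulerDerivation R)) Q (addLog (mk b) (mk a)) := by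
  rw [diffOp_logExtension_addLog, diffOp_logExtension_addLog, addLog, addLog]
  rw [mul_add, ← mul_assoc, ← Polynomial.C_mul, ← Polynomial.C_mul]
  congr 3
  · rw [eq_X_mul_iff]
    simp only [map_add, coeff_diffOp_eulerDerivation, coeff_mk, Nat.cast_zero, hP, hP', zero_mul,
      add_zero, true_and]
    exact hb
  · rw [diffOp_eulerDerivation_eq_X_mul_iff, hP, zero_mul]
    exact ⟨rfl, by simpa only [coeff_mk] using ha⟩

end Logarithm

section Wronskian

variable {R A : Type*} [CommRing R] [CommRing A] [Algebra R A]

lemma derivation_ofNat (D : Derivation R A A) (m : ℕ) [m.AtLeastTwo] :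
    D (ofNat(m) : A) = 0 := by
  rw [← Nat.cast_ofNat, D.map_natCast]

/-- The Wronskian of two elements of a differential ring. -/
def wronskian (D : Derivation R A A) (y z : A) : A := y * D z - D y * z

lemma wronskian_C_addLog (D : Derivation R A A) (f g : A) :
    wronskian (logExtension D) (Polynomial.C f) (addLog g f) =
      Polynomial.C (f * f + wronskian D f g) := by
  rw [wronskian, wronskian, logExtension_addLog, logExtension_C]
  simp only [addLog, map_add, map_sub, map_mul]
  ring

/-- The relation `hγ` says that `D³ - 3αD² - βD - γ` is the symmetric square of an operator
`D² - αD - δ` with `β = 4δ + D α - 2α²`, and `hτ` that `τ` is inverse to the Wronskian of the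
latter. -/
theorem third_order_mul_wronskian (D : Derivation R A A) {α β γ τ y z : A}
    (hγ : 2 * γ = D β - 2 * α * β - D (D α) + 6 * α * D α - 4 * α ^ 3)
    (hτ : D τ = -α * τ)
    (hy : D (D (D y)) = 3 * α * D (D y) + β * D y + γ * y)
    (hz : D (D (D z)) = 3 * α * D (D z) + β * D z + γ * z) :
    D (D (D (τ * wronskian D y z))) = 3 * α * D (D (τ * wronskian D y z)) +
      β * D (τ * wronskian D y z) + γ * (τ * wronskian D y z) := by
  set w := wronskian D y z with hw
  set v := D y * D (D z) - D z * D (D y) with hv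
  have hDw : D w = y * D (D z) - z * D (D y) := by
    simp only [hw, wronskian, map_sub, D.leibniz, smul_eq_mul]
    ring
  have hDDw : D (D w) = 3 * α * D w + β * w + v := by
    rw [hDw, hw, wronskian, hv]
    simp only [map_sub, D.leibniz, smul_eq_mul, hy, hz]
    ring
  have hDv : D v = 3 * α * v - γ * w := by
    simp only [hv, hw, wronskian, map_sub, D.leibniz, smul_eq_mul, hy, hz]
    ring
  have hDDDw : D (D (D w)) =
      3 * α * D (D w) + (3 * D α + β) * D w + (D β - γ) * w + 3 * α * v := by
    rw [hDDw]
    simp only [map_add, D.leibniz, smul_eq_mul, hDv, derivation_ofNat, hDDw]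
    ring
  have hDτ (x : A) : D (τ * x) = τ * (D x - α * x) := by
    rw [D.leibniz, hτ, smul_eq_mul, smul_eq_mul]
    ring
  simp only [hDτ, map_sub, map_add, D.leibniz, smul_eq_mul, hDDDw]
  linear_combination τ * (-3 * α) * hDDw - τ * w * hγ

end Wronskian

section Hypergeometric

/-- The polynomial `Q` with `θ³ - X Q(θ) = θ³ - 8X(2θ + 1)³`; it satisfies
`(k + 1)³ C(2k+2,k+1)³ = Q(k) C(2k,k)³`. -/
noncomputable def cubicFactor : ℚ[X] := 8 * (2 * Polynomial.X + 1) ^ 3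

lemma diffOp_cubicFactor {A : Type*} [CommRing A] [Algebra ℚ A] (D : Derivation ℚ A A) (y : A) :
    diffOp D cubicFactor y = 64 * D (D (D y)) + 96 * D (D y) + 48 * D y + 8 * y := by
  have h_expand : cubicFactor = Polynomial.C 64 * Polynomial.X ^ 3 +
      Polynomial.C 96 * Polynomial.X ^ 2 + Polynomial.C 48 * Polynomial.X + Polynomial.C 8 := by
    simp only [cubicFactor, map_ofNat]
    ring
  simp [h_expand, pow_succ, ofNat_smul_eq_nsmul]

section RationalCoefficients

variable {A : Type*} [CommRing A] [Algebra ℚ A] (D : Derivation ℚ A A) {x u : A}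

lemma diffOp_X_cube_eq_iff (h_unit : IsUnit (1 - 64 * x)) (hu : (1 - 64 * x) * u = 8 * x) (y : A) :
    diffOp D (Polynomial.X ^ 3 : ℚ[X]) y = x * diffOp D cubicFactor y ↔
      D (D (D y)) = 3 * (4 * u) * D (D y) + 6 * u * D y + u * y := by
  have h_cube : diffOp D (Polynomial.X ^ 3 : ℚ[X]) y = D (D (D y)) := by
    simp [pow_succ]
  rw [h_cube, diffOp_cubicFactor]
  refine ⟨fun h => h_unit.mul_left_cancel ?_, fun h => ?_⟩
  · linear_combination h - (12 * D (D y) + 6 * D y + y) * hu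
  · linear_combination (1 - 64 * x) * h + (12 * D (D y) + 6 * D y + y) * hu

lemma derivation_eq_self_add_sq (h_unit : IsUnit (1 - 64 * x)) (hu : (1 - 64 * x) * u = 8 * x)
    (hx : D x = x) : D u = u + 8 * u ^ 2 := by
  have h_deriv := congrArg D hu
  simp only [D.leibniz, map_sub, smul_eq_mul, D.map_one_eq_zero, hx, derivation_ofNat] at h_deriv
  apply h_unit.mul_left_cancel
  linear_combination h_deriv - (1 + 8 * u) * hu

theorem diffOp_mul_wronskian (h_unit : IsUnit (1 - 64 * x)) (hu : (1 - 64 * x) * u = 8 * x)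
    (hx : D x = x) {τ y z : A} (hτ : D τ = -(4 * u) * τ)
    (hy : diffOp D (Polynomial.X ^ 3 : ℚ[X]) y = x * diffOp D cubicFactor y)
    (hz : diffOp D (Polynomial.X ^ 3 : ℚ[X]) z = x * diffOp D cubicFactor z) :
    diffOp D (Polynomial.X ^ 3 : ℚ[X]) (τ * wronskian D y z) =
      x * diffOp D cubicFactor (τ * wronskian D y z) := by
  have hDu := derivation_eq_self_add_sq D h_unit hu hx
  rw [diffOp_X_cube_eq_iff D h_unit hu] at hy hz ⊢
  refine third_order_mul_wronskian D ?_ hτ hy hz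
  simp only [D.leibniz, D.leibniz_pow, map_add, smul_eq_mul, derivation_ofNat, hDu, map_zero]
  ring

end RationalCoefficients

/-- The coefficients `C(2k,k)³` of the holomorphic solution of `θ³ y = 8X(2θ + 1)³ y`. -/
def cubeCoeff (k : ℕ) : ℚ := (k.centralBinom : ℚ) ^ 3

/-- The logarithmic derivative of `C(2k,k)³ = Γ(2k+1)³ / Γ(k+1)⁶` with respect to `k`. -/
def logDerivCoeff (k : ℕ) : ℚ := 6 * (harmonic (2 * k) - harmonic k)

lemma centralBinom_succ_cast (k : ℕ) :
    ((k : ℚ) + 1) * (k + 1).centralBinom = 2 * (2 * k + 1) * k.centralBinom := by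
  exact_mod_cast Nat.succ_mul_centralBinom_succ k

lemma cubeCoeff_succ (k : ℕ) :
    ((k : ℚ) + 1) ^ 3 * cubeCoeff (k + 1) = 8 * (2 * k + 1) ^ 3 * cubeCoeff k := by
  rw [cubeCoeff, cubeCoeff, ← mul_pow, centralBinom_succ_cast]
  ring

lemma logDerivCoeff_succ (k : ℕ) :
    logDerivCoeff (k + 1) = logDerivCoeff k + (6 / (2 * k + 1) - 3 / (k + 1)) := by
  have h_two : 2 * (k + 1) = 2 * k + 1 + 1 := by ring
  rw [logDerivCoeff, logDerivCoeff, h_two, harmonic_succ, harmonic_succ, harmonic_succ]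
  push_cast
  field_simp
  ring

/-- `f = ∑ C(2k,k)³ Xᵏ`, the holomorphic solution of `θ³ y = 8X(2θ + 1)³ y`. -/
def cubeSeries : ℚ⟦X⟧ := mk cubeCoeff

/-- `g`, for which `g + f log X` is the second Frobenius solution of `θ³ y = 8X(2θ + 1)³ y`. -/
def logCompanion : ℚ⟦X⟧ := mk fun k => cubeCoeff k * logDerivCoeff k

/-- `∑ 16ᵏ C(2k,k) Xᵏ`, the series of `(1 - 64X)^(-1/2)`. -/
def invSqrtSeries : ℚ⟦X⟧ := mk fun k => 16 ^ k * (k.centralBinom : ℚ)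

/-- The series `u` of `8X / (1 - 64X)`, for which `θ³ y = 8X(2θ + 1)³ y` becomes
`θ³ y = 12u θ² y + 6u θ y + u y`. -/
noncomputable def ratioSeries : ℚ⟦X⟧ := 8 * X * (1 - 64 * X)⁻¹

lemma isUnit_one_sub : IsUnit (1 - 64 * X : ℚ⟦X⟧) := by
  simp [isUnit_iff_constantCoeff]

lemma one_sub_mul_ratioSeries : (1 - 64 * X) * ratioSeries = 8 * X := by
  rw [ratioSeries, mul_left_comm, PowerSeries.mul_inv_cancel _ (by simp), mul_one]

lemma eulerDerivation_invSqrtSeries :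
    eulerDerivation ℚ invSqrtSeries = 4 * ratioSeries * invSqrtSeries := by
  have h_rec : eulerDerivation ℚ invSqrtSeries =
      X * (C 64 * eulerDerivation ℚ invSqrtSeries + C 32 * invSqrtSeries) := by
    rw [eq_X_mul_iff]
    simp only [map_add, coeff_C_mul, coeff_eulerDerivation, invSqrtSeries, coeff_mk]
    refine ⟨by simp, fun n => ?_⟩
    push_cast
    linear_combination 16 ^ (n + 1) * centralBinom_succ_cast n
  simp only [map_ofNat] at h_rec
  apply isUnit_one_sub.mul_left_cancel
  linear_combination h_rec - 4 * invSqrtSeries * one_sub_mul_ratioSeries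

lemma invSqrtSeries_mul_inv : invSqrtSeries * invSqrtSeries⁻¹ = 1 :=
  PowerSeries.mul_inv_cancel _ (by simp [← coeff_zero_eq_constantCoeff_apply, invSqrtSeries])

lemma eulerDerivation_inv_invSqrtSeries :
    eulerDerivation ℚ invSqrtSeries⁻¹ = -(4 * ratioSeries) * invSqrtSeries⁻¹ := by
  rw [Derivation.leibniz_of_mul_eq_one _ ((mul_comm _ _).trans invSqrtSeries_mul_inv),
    eulerDerivation_invSqrtSeries, smul_eq_mul]
  linear_combination -4 * ratioSeries * invSqrtSeries⁻¹ * invSqrtSeries_mul_inv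

lemma cubicFactor_eval (x : ℚ) : cubicFactor.eval x = 8 * (2 * x + 1) ^ 3 := by
  simp [cubicFactor]

lemma derivative_cubicFactor_eval (x : ℚ) :
    (Polynomial.derivative cubicFactor).eval x = 48 * (2 * x + 1) ^ 2 := by
  simp only [cubicFactor, Polynomial.derivative_mul, Polynomial.derivative_pow,
    Polynomial.derivative_add, Polynomial.derivative_ofNat, Polynomial.derivative_X,
    Polynomial.derivative_one, Polynomial.eval_add, Polynomial.eval_mul, Polynomial.eval_pow,
    Polynomial.eval_ofNat, Polynomial.eval_X, Polynomial.eval_one, Polynomial.eval_zero,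
    Polynomial.eval_C]
  push_cast
  ring

lemma diffOp_cubeSeries :
    diffOp (eulerDerivation ℚ) (Polynomial.X ^ 3 : ℚ[X]) cubeSeries =
      X * diffOp (eulerDerivation ℚ) cubicFactor cubeSeries := by
  rw [diffOp_eulerDerivation_eq_X_mul_iff]
  refine ⟨by simp, fun n => ?_⟩
  simpa [cubeSeries, cubicFactor_eval] using cubeCoeff_succ n

lemma diffOp_addLog_logCompanion_cubeSeries :
    diffOp (logExtension (eulerDerivation ℚ)) (Polynomial.X ^ 3 : ℚ[X])
        (addLog logCompanion cubeSeries) =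
      Polynomial.C X * diffOp (logExtension (eulerDerivation ℚ)) cubicFactor
        (addLog logCompanion cubeSeries) := by
  apply diffOp_addLog_of_recurrence
  · simp
  · simp
  · intro n
    simpa [cubicFactor_eval] using cubeCoeff_succ n
  · intro n
    have h_rec := cubeCoeff_succ n
    have h_eval : (Polynomial.derivative (Polynomial.X ^ 3 : ℚ[X])).eval ((n + 1 : ℕ) : ℚ) =
        3 * ((n : ℚ) + 1) ^ 2 := by
      norm_num [Polynomial.derivative_X_pow]
    rw [h_eval, cubicFactor_eval, derivative_cubicFactor_eval, logDerivCoeff_succ,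
      Polynomial.eval_pow, Polynomial.eval_X]
    push_cast
    linear_combination (norm := skip) (logDerivCoeff n + 6 / (2 * n + 1)) * h_rec
    field_simp
    ring

/-- `√(1 - 64X) (f² + f θg - θf g)`, the normalized Wronskian of `f` and `g + f log X`. -/
noncomputable def normalizedWronskian : ℚ⟦X⟧ :=
  invSqrtSeries⁻¹ *
    (cubeSeries * cubeSeries + wronskian (eulerDerivation ℚ) cubeSeries logCompanion)

lemma diffOp_normalizedWronskian :
    diffOp (eulerDerivation ℚ) (Polynomial.X ^ 3 : ℚ[X]) normalizedWronskian =
      X * diffOp (eulerDerivation ℚ) cubicFactor normalizedWronskian := by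
  let δ := logExtension (eulerDerivation ℚ)
  have h_unit : IsUnit (1 - 64 * Polynomial.C X : ℚ⟦X⟧[X]) := by
    simpa [map_ofNat] using isUnit_one_sub.map (Polynomial.C : ℚ⟦X⟧ →+* ℚ⟦X⟧[X])
  have h_u : (1 - 64 * Polynomial.C X) * Polynomial.C ratioSeries = 8 * Polynomial.C X := by
    simpa [map_ofNat] using congrArg (Polynomial.C : ℚ⟦X⟧ →+* ℚ⟦X⟧[X]) one_sub_mul_ratioSeries
  have h_X : δ (Polynomial.C X) = Polynomial.C X := by
    rw [logExtension_C, eulerDerivation_X]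
  have h_invSqrt : δ (Polynomial.C invSqrtSeries⁻¹) =
      -(4 * Polynomial.C ratioSeries) * Polynomial.C invSqrtSeries⁻¹ := by
    simp [δ, logExtension_C, eulerDerivation_inv_invSqrtSeries, map_ofNat]
  have h_cube : diffOp δ (Polynomial.X ^ 3 : ℚ[X]) (Polynomial.C cubeSeries) =
      Polynomial.C X * diffOp δ cubicFactor (Polynomial.C cubeSeries) := by
    simp only [δ, diffOp_logExtension_C, diffOp_cubeSeries, Polynomial.C_mul]
  have h_wronskian : Polynomial.C normalizedWronskian = Polynomial.C invSqrtSeries⁻¹ *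
      wronskian δ (Polynomial.C cubeSeries) (addLog logCompanion cubeSeries) := by
    rw [wronskian_C_addLog, ← Polynomial.C_mul, normalizedWronskian]
  apply Polynomial.C_injective
  rw [Polynomial.C_mul, ← diffOp_logExtension_C, ← diffOp_logExtension_C, h_wronskian]
  exact diffOp_mul_wronskian δ h_unit h_u h_X h_invSqrt h_cube
    diffOp_addLog_logCompanion_cubeSeries

lemma normalizedWronskian_eq_cubeSeries : normalizedWronskian = cubeSeries := by
  refine eq_of_diffOp_eulerDerivation_eq_X_mul (fun n => ?_) diffOp_normalizedWronskian
    diffOp_cubeSeries ?_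
  · rw [Polynomial.eval_pow, Polynomial.eval_X]
    positivity
  · simp [normalizedWronskian, wronskian, eulerDerivation, invSqrtSeries, cubeSeries, cubeCoeff,
      logCompanion, logDerivCoeff]

theorem cubeSeries_sq_add_wronskian :
    cubeSeries * cubeSeries + wronskian (eulerDerivation ℚ) cubeSeries logCompanion =
      cubeSeries * invSqrtSeries := by
  have h_eq := normalizedWronskian_eq_cubeSeries
  rw [normalizedWronskian] at h_eq
  linear_combination invSqrtSeries * h_eq -
    (cubeSeries * cubeSeries + wronskian (eulerDerivation ℚ) cubeSeries logCompanion) *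
      invSqrtSeries_mul_inv

theorem sum_cubeCoeff_mul_logDerivCoeff (n : ℕ) :
    ∑ k ∈ Finset.range (n + 1), cubeCoeff k * cubeCoeff (n - k) *
        (1 + k * (logDerivCoeff k - logDerivCoeff (n - k))) =
      ∑ k ∈ Finset.range (n + 1), cubeCoeff k * (16 ^ (n - k) * (n - k).centralBinom) := by
  have h_coeff := congrArg (coeff n) cubeSeries_sq_add_wronskian
  rw [wronskian, mul_comm _ (eulerDerivation ℚ logCompanion)] at h_coeff
  simp only [map_add, map_sub, coeff_mul, coeff_eulerDerivation,
    Finset.Nat.sum_antidiagonal_eq_sum_range_succ_mk, cubeSeries, logCompanion, invSqrtSeries,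
    coeff_mk] at h_coeff
  rw [← Finset.sum_sub_distrib, ← Finset.sum_add_distrib] at h_coeff
  rw [← h_coeff]
  refine Finset.sum_congr rfl fun k _ => ?_
  ring

end Hypergeometric

end HarmonicBinomial

theorem harmonic_binomial_identity_wronskian (n : ℕ) :
    (∑ k ∈ Finset.range (n + 1),
        ((2 * k).choose k : ℚ) ^ 3 * ((2 * n - 2 * k).choose (n - k) : ℚ) ^ 3 *
          (1 + 6 * (k : ℚ) * (-harmonic k + harmonic (n - k)
            + harmonic (2 * k) - harmonic (2 * n - 2 * k)))) =
      ∑ k ∈ Finset.range (n + 1),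
        (16 : ℚ) ^ (n - k) * ((2 * k).choose k : ℚ) ^ 3 * ((2 * n - 2 * k).choose (n - k) : ℚ) := by
  convert HarmonicBinomial.sum_cubeCoeff_mul_logDerivCoeff n using 2 with k _ k _
  all_goals
    simp only [HarmonicBinomial.cubeCoeff, HarmonicBinomial.logDerivCoeff, Nat.mul_sub,
      Nat.centralBinom_eq_two_mul_choose]
    ring
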